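/- Spectral form of the minimax correction filter with a smoothness prior and predefined reconstruction: let v : {0,…,N−1} → ℝ with v(i) ≠ 0 for all i, let s, w : {0,…,N−1} → ℝ, define w̃(i) = s(i)/v(i)², and set W := U diag(w) D^T, W̃ := U diag(w̃) D^T, and S^* := D diag(s) U^*. If R̃_{s w̃}(i) ≠ 0 and R̃_{ww}(i) ≠ 0 for every i ∈ {0,…,K−1}, then the correction transform (W^* W)^{−1} W^* W̃ (S^* W̃)^{−1} equals the K×K diagonal matrix with i-th diagonal entry R̃_{w w̃}(i)/(R̃_{s w̃}(i)·R̃_{ww}(i)). -/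

import Mathlib

open Matrix BigOperators

noncomputable section

/-- Downsampling matrix `D ∈ ℂ^{K×N}` with `N = M·K`: `D i j = 1` iff `j ≡ i (mod K)`. -/
def Dmat (K M : ℕ) : Matrix (Fin K) (Fin (M * K)) ℂ :=
  Matrix.of fun i j => if (j : ℕ) % K = (i : ℕ) then 1 else 0

/-- The index `i + K·ℓ` viewed in `Fin (M·K)`. -/
def fold (K M : ℕ) (i : Fin K) (ℓ : Fin M) : Fin (M * K) :=
  ⟨(i : ℕ) + K * (ℓ : ℕ), by
    have hi := i.isLt
    calc (i : ℕ) + K * (ℓ : ℕ) < K + K * (ℓ : ℕ) := by omega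
      _ = K * ((ℓ : ℕ) + 1) := by ring
      _ ≤ K * M := Nat.mul_le_mul_left K ℓ.isLt
      _ = M * K := Nat.mul_comm K M⟩

/-- Sampled cross-correlation `R̃_{fg}(i) = ∑_{ℓ<M} f(i+Kℓ) g(i+Kℓ)`. -/
def Rtil (K M : ℕ) (f g : Fin (M * K) → ℝ) (i : Fin K) : ℝ :=
  ∑ ℓ : Fin M, f (fold K M i ℓ) * g (fold K M i ℓ)

/-- Sampling matrix `S^* = D diag(s) U^*`. -/
def SamplingMat (K M : ℕ) (U : Matrix (Fin (M * K)) (Fin (M * K)) ℂ)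
    (s : Fin (M * K) → ℝ) : Matrix (Fin K) (Fin (M * K)) ℂ :=
  Dmat K M * Matrix.diagonal (fun j => (s j : ℂ)) * Uᴴ

/-- Synthesis matrix `A = U diag(a) Dᵀ`. -/
def SynthesisMat (K M : ℕ) (U : Matrix (Fin (M * K)) (Fin (M * K)) ℂ)
    (a : Fin (M * K) → ℝ) : Matrix (Fin (M * K)) (Fin K) ℂ :=
  U * Matrix.diagonal (fun j => (a j : ℂ)) * (Dmat K M)ᵀ

theorem core_diag (K M : ℕ) (f g : Fin (M * K) → ℝ) :
    Dmat K M * Matrix.diagonal (fun j => (f j : ℂ)) *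
      (Matrix.diagonal (fun j => (g j : ℂ)) * (Dmat K M)ᵀ)
      = Matrix.diagonal (fun i => ((Rtil K M f g i : ℝ) : ℂ)) := by
  ext i k
  rw [Matrix.mul_apply]
  simp only [Matrix.mul_diagonal, Matrix.diagonal_mul, Matrix.transpose_apply]
  rw [← finProdFinEquiv.sum_comp, Fintype.sum_prod_type]
  have key : ∀ (x : Fin M) (y a : Fin K),
      Dmat K M a (finProdFinEquiv (x, y)) = if y = a then 1 else 0 := by
    intro x y a
    simp [Dmat, Nat.mod_eq_of_lt y.isLt, Fin.ext_iff]
  have hf : ∀ (x : Fin M) (y : Fin K), finProdFinEquiv (x, y) = fold K M y x := by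
    intro x y
    apply Fin.ext
    simp [fold]
  simp only [key]
  simp only [hf]
  by_cases h : i = k
  · subst h
    simp [Rtil]
  · simp [h, Ne.symm h]

theorem SS (K M : ℕ) (U : Matrix (Fin (M * K)) (Fin (M * K)) ℂ)
    (hU : U ∈ Matrix.unitaryGroup (Fin (M * K)) ℂ) (f g : Fin (M * K) → ℝ) :
    SamplingMat K M U f * SynthesisMat K M U g
      = Matrix.diagonal (fun i => ((Rtil K M f g i : ℝ) : ℂ)) := by
  have h : Uᴴ * U = 1 := Matrix.mem_unitaryGroup_iff'.mp hU
  rw [← core_diag, SamplingMat, SynthesisMat, Matrix.mul_assoc _ Uᴴ, Matrix.mul_assoc U,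
    ← Matrix.mul_assoc Uᴴ, h, Matrix.one_mul]

theorem synth_conj (K M : ℕ) (U : Matrix (Fin (M * K)) (Fin (M * K)) ℂ)
    (f : Fin (M * K) → ℝ) : (SynthesisMat K M U f)ᴴ = SamplingMat K M U f := by
  have hD : ((Dmat K M)ᵀ)ᴴ = Dmat K M := by
    ext i j
    simp only [Matrix.conjTranspose_apply, Matrix.transpose_apply, Dmat, Matrix.of_apply]
    split_ifs <;> simp
  have hd : (Matrix.diagonal (fun j => (f j : ℂ)))ᴴ = Matrix.diagonal (fun j => (f j : ℂ)) := by
    rw [Matrix.diagonal_conjTranspose]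
    congr 1
    ext j
    simp
  rw [SynthesisMat, SamplingMat, Matrix.conjTranspose_mul, Matrix.conjTranspose_mul, hD, hd,
    Matrix.mul_assoc]

theorem diag_inv (K : ℕ) (r : Fin K → ℝ) (hr : ∀ i, r i ≠ 0) :
    (Matrix.diagonal (fun i => (r i : ℂ)))⁻¹ = Matrix.diagonal (fun i => ((r i : ℂ))⁻¹) := by
  apply Matrix.inv_eq_right_inv
  rw [Matrix.diagonal_mul_diagonal, ← Matrix.diagonal_one]
  congr 1
  ext i
  exact mul_inv_cancel₀ (by exact_mod_cast hr i)

/-- Spectral form of the minimax correction filter with a smoothness prior and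
predefined reconstruction: `(W^*W)⁻¹ W^* W̃ (S^* W̃)⁻¹` is diagonal with entries
`R̃_{w w̃}(i)/(R̃_{s w̃}(i)·R̃_{ww}(i))`, where `w̃(i) = s(i)/v(i)²`. -/
theorem smoothness_minimax_correction_spectral_form (K M : ℕ) (hK : 0 < K) (hM : 0 < M)
    (U : Matrix (Fin (M * K)) (Fin (M * K)) ℂ)
    (hU : U ∈ Matrix.unitaryGroup (Fin (M * K)) ℂ)
    (s w v : Fin (M * K) → ℝ) (hv : ∀ i, v i ≠ 0)
    (hRswt : ∀ i : Fin K, Rtil K M s (fun j => s j / (v j) ^ 2) i ≠ 0)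
    (hRww : ∀ i : Fin K, Rtil K M w w i ≠ 0) :
    ((SynthesisMat K M U w)ᴴ * SynthesisMat K M U w)⁻¹
        * ((SynthesisMat K M U w)ᴴ * SynthesisMat K M U (fun j => s j / (v j) ^ 2))
        * (SamplingMat K M U s * SynthesisMat K M U (fun j => s j / (v j) ^ 2))⁻¹
      = Matrix.diagonal (fun i : Fin K =>
          ((Rtil K M w (fun j => s j / (v j) ^ 2) i
              / (Rtil K M s (fun j => s j / (v j) ^ 2) i * Rtil K M w w i) : ℝ) : ℂ)) := by
  rw [synth_conj, SS K M U hU, SS K M U hU, SS K M U hU, diag_inv K _ hRww, diag_inv K _ hRswt,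
    Matrix.diagonal_mul_diagonal, Matrix.diagonal_mul_diagonal]
  congr 1
  ext i
  push_cast
  rw [div_eq_mul_inv, mul_inv]
  ring
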